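/- For all nonnegative integers n and k, the number of matchings in M_n^k(321) equals the number of pairs (D_0, D_1) of Dyck paths of semilength n+k such that D_0 lies weakly below D_1 and both D_0 and D_1 end with k consecutive south steps. (In the paper this is realized by an explicit bijection.) -/

import Mathlib

/-! ### Patterns of length 3 and 4 as permutations (0-indexed values) -/

def p123 : Equiv.Perm (Fin 3) :=
  ⟨![0,1,2], ![0,1,2], by intro x; fin_cases x <;> rfl, by intro x; fin_cases x <;> rfl⟩
def p132 : Equiv.Perm (Fin 3) :=
  ⟨![0,2,1], ![0,2,1], by intro x; fin_cases x <;> rfl, by intro x; fin_cases x <;> rfl⟩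
def p213 : Equiv.Perm (Fin 3) :=
  ⟨![1,0,2], ![1,0,2], by intro x; fin_cases x <;> rfl, by intro x; fin_cases x <;> rfl⟩
def p231 : Equiv.Perm (Fin 3) :=
  ⟨![1,2,0], ![2,0,1], by intro x; fin_cases x <;> rfl, by intro x; fin_cases x <;> rfl⟩
def p312 : Equiv.Perm (Fin 3) :=
  ⟨![2,0,1], ![1,2,0], by intro x; fin_cases x <;> rfl, by intro x; fin_cases x <;> rfl⟩
def p321 : Equiv.Perm (Fin 3) :=
  ⟨![2,1,0], ![2,1,0], by intro x; fin_cases x <;> rfl, by intro x; fin_cases x <;> rfl⟩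
def p1342 : Equiv.Perm (Fin 4) :=
  ⟨![0,2,3,1], ![0,3,1,2], by intro x; fin_cases x <;> rfl, by intro x; fin_cases x <;> rfl⟩
def p1324 : Equiv.Perm (Fin 4) :=
  ⟨![0,2,1,3], ![0,2,1,3], by intro x; fin_cases x <;> rfl, by intro x; fin_cases x <;> rfl⟩

/-! ### Perfect matchings of `[2n] = {1, …, 2n}` as finsets of pairs `(i,j)`, `i < j` -/

/-- `M` is a perfect matching of `{1, …, 2n}`. -/
def IsPerfectMatching (n : ℕ) (M : Finset (ℕ × ℕ)) : Prop :=
  (∀ p ∈ M, p.1 < p.2 ∧ 1 ≤ p.1 ∧ p.2 ≤ 2 * n) ∧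
  ∀ x, 1 ≤ x → x ≤ 2 * n → ∃! p, p ∈ M ∧ (p.1 = x ∨ p.2 = x)

/-- The matching `M` contains the pattern `τ ∈ S_k`: there are
`i_1 < i_2 < ⋯ < i_{2k}` with `(i_a, i_{2k+1-τ(a)}) ∈ M` for all `1 ≤ a ≤ k`
(written here 0-indexed). -/
def MatchContains {k : ℕ} (τ : Equiv.Perm (Fin k)) (M : Finset (ℕ × ℕ)) : Prop :=
  ∃ f : Fin (2 * k) → ℕ, StrictMono f ∧
    ∀ a : Fin k,
      (f ⟨a.1, by have := a.isLt; omega⟩,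
       f ⟨2 * k - 1 - (τ a).1, by have := (τ a).isLt; omega⟩) ∈ M

def MatchAvoids {k : ℕ} (τ : Equiv.Perm (Fin k)) (M : Finset (ℕ × ℕ)) : Prop :=
  ¬ MatchContains τ M

/-! ### Dyck paths as lists of booleans (`true` = east step, `false` = south step) -/

/-- A Dyck path of semilength `n`, from `(0,n)` to `(n,0)`, staying weakly above `y = n - x`. -/
def IsDyckPath (n : ℕ) (t : List Bool) : Prop :=
  t.length = 2 * n ∧ t.count true = n ∧
  ∀ i, (t.take i).count false ≤ (t.take i).count true

/-- The height (distance above the diagonal) of the `i`-th vertex of the path `t`. -/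
def pathHeight (t : List Bool) (i : ℕ) : ℤ :=
  ((t.take i).count true : ℤ) - ((t.take i).count false : ℤ)

/-- `s` lies weakly below `t` (for paths of the same semilength). -/
def WeaklyBelow (s t : List Bool) : Prop := ∀ i, pathHeight s i ≤ pathHeight t i

/-- The shape of a matching of `[2n]`: an east step for each opener, a south step for
each closer. -/
def shapeOf (n : ℕ) (M : Finset (ℕ × ℕ)) : List Bool :=
  (List.range (2 * n)).map fun x => decide ((x + 1) ∈ M.image Prod.fst)

/-- Number of returns of a path: south steps ending on the diagonal. -/
def returnsOf (t : List Bool) : ℕ :=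
  ((Finset.range t.length).filter fun i =>
    t[i]? = some false ∧ (t.take (i+1)).count true = (t.take (i+1)).count false).card

/-- Height sequence of a path, as natural numbers. -/
def hseq (t : List Bool) (i : ℕ) : ℕ := (t.take i).count true - (t.take i).count false

/-- `η(F)`: the number of indices `0 ≤ i ≤ 2n` with `h_i = 2`. -/
def etaOf (n : ℕ) (t : List Bool) : ℕ :=
  ((Finset.range (2 * n + 1)).filter fun i => hseq t i = 2).card

/-! ### Full rook placements on Ferrers boards -/

/-- The square in column `c`, row `r` (both 1-indexed from the bottom left) belongs to the
Ferrers board with border path `t ∈ F_n`. -/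
def InBoard (n : ℕ) (t : List Bool) (c r : ℕ) : Prop :=
  1 ≤ c ∧ 1 ≤ r ∧ ∃ i, c ≤ (t.take i).count true ∧ (t.take i).count false + r ≤ n

/-- `R` is a full rook placement on the Ferrers board with border path `t ∈ F_n`:
one rook in each of the `n` rows and `n` columns. -/
def IsFullRookPlacement (n : ℕ) (t : List Bool) (R : Finset (ℕ × ℕ)) : Prop :=
  (∀ p ∈ R, InBoard n t p.1 p.2) ∧
  (∀ c, 1 ≤ c → c ≤ n → ∃! p, p ∈ R ∧ p.1 = c) ∧
  (∀ r, 1 ≤ r → r ≤ n → ∃! p, p ∈ R ∧ p.2 = r)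

/-- The rooks of `R` lying in the rectangle `Γ(V_i)` determined by the `i`-th border vertex. -/
def rectRooks (n : ℕ) (t : List Bool) (R : Finset (ℕ × ℕ)) (i : ℕ) : Finset (ℕ × ℕ) :=
  R.filter fun p => p.1 ≤ (t.take i).count true ∧ p.2 + (t.take i).count false ≤ n

/-- Length of the longest increasing sequence (in both coordinates) in a finite point set. -/
def lisLen (S : Finset (ℕ × ℕ)) : ℕ :=
  (S.powerset.filter fun T => ∀ p ∈ T, ∀ q ∈ T, p.1 < q.1 → p.2 < q.2).sup Finset.card

/-- The full rook placement `R` on the board with border `t ∈ F_n` contains the pattern `τ`: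
some rectangle `Γ(V_i)` contains an occurrence of `τ`. -/
def PlacementContains {k : ℕ} (τ : Equiv.Perm (Fin k)) (n : ℕ) (t : List Bool)
    (R : Finset (ℕ × ℕ)) : Prop :=
  ∃ i ≤ 2 * n, ∃ f : Fin k → ℕ × ℕ,
    (∀ a, f a ∈ R ∧ (f a).1 ≤ (t.take i).count true ∧ (f a).2 + (t.take i).count false ≤ n) ∧
    (∀ a b : Fin k, a < b → (f a).1 < (f b).1) ∧
    (∀ a b : Fin k, τ a < τ b → (f a).2 < (f b).2)

def PlacementAvoids {k : ℕ} (τ : Equiv.Perm (Fin k)) (n : ℕ) (t : List Bool)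
    (R : Finset (ℕ × ℕ)) : Prop :=
  ¬ PlacementContains τ n t R

/-- `R` is board-minimal on the board with border `t`: every peak corner square holds a rook. -/
def BoardMinimal (n : ℕ) (t : List Bool) (R : Finset (ℕ × ℕ)) : Prop :=
  ∀ i, t[i]? = some true → t[i+1]? = some false →
    ((t.take (i+1)).count true, n - (t.take (i+1)).count false) ∈ R

/-- Board-minimal full rook placements on boards of `F_n` avoiding the pattern `σ`,
recorded as pairs (border path, rook set). -/
def MinPlacements (n : ℕ) {k : ℕ} (σ : Equiv.Perm (Fin k)) :
    Set (List Bool × Finset (ℕ × ℕ)) :=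
  {tR | IsDyckPath n tR.1 ∧ IsFullRookPlacement n tR.1 tR.2 ∧ BoardMinimal n tR.1 tR.2 ∧
        PlacementAvoids σ n tR.1 tR.2}

/-! ### Pattern avoidance in permutations -/

def PermContains {n k : ℕ} (τ : Equiv.Perm (Fin k)) (π : Equiv.Perm (Fin n)) : Prop :=
  ∃ f : Fin k → Fin n, StrictMono f ∧ ∀ a b : Fin k, τ a < τ b → π (f a) < π (f b)

def PermAvoids {n k : ℕ} (τ : Equiv.Perm (Fin k)) (π : Equiv.Perm (Fin n)) : Prop :=
  ¬ PermContains τ π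

/-- The full rook placement associated to a permutation of `[n]`. -/
def permPlacement {n : ℕ} (π : Equiv.Perm (Fin n)) : Finset (ℕ × ℕ) :=
  Finset.univ.image fun i : Fin n => ((i : ℕ) + 1, (π i : ℕ) + 1)

/-! ### Matchings with fixed points -/

/-- A (not necessarily perfect) matching on `{1, …, m}`: pairwise disjoint pairs. -/
def IsPartialMatching (m : ℕ) (M : Finset (ℕ × ℕ)) : Prop :=
  (∀ p ∈ M, p.1 < p.2 ∧ 1 ≤ p.1 ∧ p.2 ≤ m) ∧
  ∀ p ∈ M, ∀ q ∈ M, p ≠ q → p.1 ≠ q.1 ∧ p.1 ≠ q.2 ∧ p.2 ≠ q.1 ∧ p.2 ≠ q.2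

/-- The fixed points (unmatched vertices) of a matching on `{1, …, m}`. -/
def fixedPts (m : ℕ) (M : Finset (ℕ × ℕ)) : Finset ℕ :=
  (Finset.Icc 1 m).filter fun x => ∀ p ∈ M, p.1 ≠ x ∧ p.2 ≠ x

/-- The matched vertices of a matching on `{1, …, m}`. -/
def matchedSet (m : ℕ) (M : Finset (ℕ × ℕ)) : Finset ℕ :=
  (Finset.Icc 1 m).filter fun x => ∃ p ∈ M, p.1 = x ∨ p.2 = x

/-- The rank (1-based) of `x` inside the finset `S`. -/
def rankIn (S : Finset ℕ) (x : ℕ) : ℕ := (S.filter (· ≤ x)).card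

/-- The matching obtained by removing the fixed points and relabeling increasingly. -/
def relabeled (m : ℕ) (M : Finset (ℕ × ℕ)) : Finset (ℕ × ℕ) :=
  M.image fun p => (rankIn (matchedSet m M) p.1, rankIn (matchedSet m M) p.2)

/-! ### Set partitions -/

/-- `(i,j)` is an arc of the set partition `P` of `{1, …, n}`: `i < j` lie in a common block
with no element of that block strictly between them. -/
def PartArc {n : ℕ} (P : Finpartition (Finset.Icc 1 n)) (i j : ℕ) : Prop :=
  i < j ∧ ∃ B ∈ P.parts, i ∈ B ∧ j ∈ B ∧ ∀ x ∈ B, ¬(i < x ∧ x < j)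

/-- The set partition `P` contains the pattern `τ ∈ S_k`. -/
def PartContains {k n : ℕ} (τ : Equiv.Perm (Fin k)) (P : Finpartition (Finset.Icc 1 n)) : Prop :=
  ∃ f : Fin (2 * k) → ℕ, StrictMono f ∧
    ∀ a : Fin k,
      PartArc P (f ⟨a.1, by have := a.isLt; omega⟩)
        (f ⟨2 * k - 1 - (τ a).1, by have := (τ a).isLt; omega⟩)

def PartAvoids {k n : ℕ} (τ : Equiv.Perm (Fin k)) (P : Finpartition (Finset.Icc 1 n)) : Prop :=
  ¬ PartContains τ P

/-! ### Counting functions -/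

/-- `|M_n(τ)|`: the number of `τ`-avoiding perfect matchings of `[2n]`. -/
noncomputable def mcount {k : ℕ} (τ : Equiv.Perm (Fin k)) (n : ℕ) : ℕ :=
  {M : Finset (ℕ × ℕ) | IsPerfectMatching n M ∧ MatchAvoids τ M}.ncard

/-- `|M_n(σ,τ)|`: the number of perfect matchings of `[2n]` avoiding both `σ` and `τ`. -/
noncomputable def mcount2 {k : ℕ} (σ τ : Equiv.Perm (Fin k)) (n : ℕ) : ℕ :=
  {M : Finset (ℕ × ℕ) | IsPerfectMatching n M ∧ MatchAvoids σ M ∧ MatchAvoids τ M}.ncard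

/-- `|P_n(τ)|`: the number of `τ`-avoiding set partitions of `[n]`. -/
noncomputable def pcount {k : ℕ} (τ : Equiv.Perm (Fin k)) (n : ℕ) : ℕ :=
  Nat.card {P : Finpartition (Finset.Icc 1 n) // PartAvoids τ P}

/-- `|P_n(σ,τ)|`: the number of set partitions of `[n]` avoiding both `σ` and `τ`. -/
noncomputable def pcount2 {k : ℕ} (σ τ : Equiv.Perm (Fin k)) (n : ℕ) : ℕ :=
  Nat.card {P : Finpartition (Finset.Icc 1 n) // PartAvoids σ P ∧ PartAvoids τ P}

/-- `|S_n(τ)|`: the number of `τ`-avoiding permutations of `[n]`. -/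
noncomputable def scount {k : ℕ} (τ : Equiv.Perm (Fin k)) (n : ℕ) : ℕ :=
  Nat.card {π : Equiv.Perm (Fin n) // PermAvoids τ π}

/-! Both cardinalities equal the number of walks of length `2n + k` from the one-row partition `(k)`
to the empty partition in the lattice of partitions with at most two rows, where each step adds or
removes a box. For a pair of noncrossing paths, `λ` is read off the two heights `λ₁ - λ₂` and
`λ₁ + λ₂`.

For a matching, scan the vertices from right to left and keep the closers whose openers are still
to come in decreasing order, cut into blocks within which the arcs must be nested. A closer starts
a new block. A fixed point merges all blocks, since no two arcs that cross may pass over it. An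
opener that picks a block has to take its smallest closer `j`, and merges the closers below `j` into
one block, since two of their arcs that cross would form `321` with the arc of `j`. By induction on
the number `N` of remaining vertices, the number of ways to complete the matching depends only on
the block sizes `β` and the number `s` of fixed points still to come: it is the sum over `λ` of the
Kostka number of shape `λ` and content `(s, β)` times the number of walks of length `N` from `λ` to
the empty partition. In the induction, closers add boxes, and openers and fixed points together
account for the removal of a box: moving the removal past the horizontal strips of content `(s, β)`
by the identity `h_{m+1} / x = h_m + y ^ (m + 1) / x` yields one term for each possible vertex.
-/

/-! ### Pieri operators on two-row partitions -/

section TwoRowAlgebra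

open Finset.HasAntidiagonal (antidiagonal)

variable {A : Type*} [AddCommMonoid A]

/-- The functional on `ℕ[x, y]`, encoded by its values `F u v` on the monomials `x ^ u * y ^ v`,
precomposed with multiplication by the complete homogeneous polynomial `h_m(x, y)`. On shifted
partitions `(u, v) = (λ₁ + 1, λ₂)` this adds a horizontal strip of size `m` (Pieri's rule). -/
def addStrip (m : ℕ) (F : ℕ → ℕ → A) (u v : ℕ) : A :=
  ∑ p ∈ antidiagonal m, F (u + p.1) (v + p.2)

/-- The functional `F` precomposed with multiplication by `x⁻¹ + y⁻¹`, where monomials with a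
negative exponent are dropped; on shifted partitions this removes a box. -/
def removeBox (F : ℕ → ℕ → A) (u v : ℕ) : A :=
  (if u = 0 then 0 else F (u - 1) v) + if v = 0 then 0 else F u (v - 1)

/-- Successive addition of horizontal strips of the sizes in the list, hence the dual of
multiplication by the corresponding product of complete homogeneous polynomials. On an antisymmetric
`F`, the value of `addStrips β F` at `(1, 0)`, which is the empty partition, is the sum over two-row
partitions `λ` of the Kostka number of shape `λ` and content `β` times `F (λ₁ + 1) λ₂`. -/
def addStrips (β : List ℕ) (F : ℕ → ℕ → A) : ℕ → ℕ → A :=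
  β.foldl (fun G m => addStrip m G) F

@[simp]
lemma addStrip_zero (F : ℕ → ℕ → A) : addStrip 0 F = F := by
  funext u v
  simp [addStrip]

lemma addStrip_one (F : ℕ → ℕ → A) (u v : ℕ) :
    addStrip 1 F u v = F u (v + 1) + F (u + 1) v := by
  simp [addStrip, Finset.Nat.antidiagonal_succ]

lemma addStrip_add (m : ℕ) (F G : ℕ → ℕ → A) :
    addStrip m (F + G) = addStrip m F + addStrip m G := by
  funext u v
  simp [addStrip, Finset.sum_add_distrib]

lemma addStrip_comm (m n : ℕ) (F : ℕ → ℕ → A) :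
    addStrip m (addStrip n F) = addStrip n (addStrip m F) := by
  funext u v
  simp only [addStrip]
  rw [Finset.sum_comm]
  simp only [add_right_comm]

lemma addStrip_ite_snd_eq_zero (m : ℕ) (G : ℕ → ℕ → A) :
    addStrip m (fun u v => if v = 0 then G u v else 0) =
      fun u v => if v = 0 then G (u + m) v else 0 := by
  funext u v
  rw [addStrip, Finset.sum_eq_single (m, 0)] <;> grind [Finset.HasAntidiagonal.mem_antidiagonal]

lemma addStrip_ite_fst_eq_zero (m : ℕ) (G : ℕ → ℕ → A) :
    addStrip m (fun u v => if u = 0 then G u v else 0) =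
      fun u v => if u = 0 then G u (v + m) else 0 := by
  funext u v
  rw [addStrip, Finset.sum_eq_single (0, m)] <;> grind [Finset.HasAntidiagonal.mem_antidiagonal]

/-- The dual form of `h_{m+1} / x = h_m + y ^ (m + 1) / x`, and likewise for `y`. -/
lemma addStrip_removeBox (m : ℕ) (F : ℕ → ℕ → A) :
    addStrip (m + 1) (removeBox F) = removeBox (addStrip (m + 1) F) +
      ((fun u v => if u = 0 then addStrip m F u v else 0) +
        fun u v => if v = 0 then addStrip m F u v else 0) := by
  funext u v
  have fst : ∑ p ∈ antidiagonal (m + 1), (if u + p.1 = 0 then 0 else F (u + p.1 - 1) (v + p.2)) =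
      (if u = 0 then 0 else addStrip (m + 1) F (u - 1) v) +
        if u = 0 then addStrip m F u v else 0 := by
    rcases u with - | u
    · simp [addStrip, Finset.Nat.sum_antidiagonal_succ]
    · simp [addStrip, Nat.add_right_comm]
  have snd : ∑ p ∈ antidiagonal (m + 1), (if v + p.2 = 0 then 0 else F (u + p.1) (v + p.2 - 1)) =
      (if v = 0 then 0 else addStrip (m + 1) F u (v - 1)) +
        if v = 0 then addStrip m F u v else 0 := by
    rcases v with - | v
    · simp [addStrip, Finset.Nat.sum_antidiagonal_succ']
    · simp [addStrip, Nat.add_right_comm]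
  simp only [Pi.add_apply]
  rw [addStrip, removeBox, add_add_add_comm, ← fst, ← snd, ← Finset.sum_add_distrib]
  rfl

lemma addStrips_cons (m : ℕ) (β : List ℕ) (F : ℕ → ℕ → A) :
    addStrips (m :: β) F = addStrips β (addStrip m F) := rfl

lemma addStrips_append (β γ : List ℕ) (F : ℕ → ℕ → A) :
    addStrips (β ++ γ) F = addStrips γ (addStrips β F) := List.foldl_append

lemma addStrips_add (β : List ℕ) (F G : ℕ → ℕ → A) :
    addStrips β (F + G) = addStrips β F + addStrips β G := by
  induction β generalizing F G with
  | nil => rfl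
  | cons m β ih => simp only [addStrips_cons, addStrip_add, ih]

lemma addStrips_addStrip (β : List ℕ) (m : ℕ) (F : ℕ → ℕ → A) :
    addStrips β (addStrip m F) = addStrip m (addStrips β F) := by
  induction β generalizing F with
  | nil => rfl
  | cons n β ih => rw [addStrips_cons, addStrip_comm, ih, addStrips_cons]

lemma addStrips_ite_snd_eq_zero (β : List ℕ) (G : ℕ → ℕ → A) :
    addStrips β (fun u v => if v = 0 then G u v else 0) =
      fun u v => if v = 0 then G (u + β.sum) v else 0 := by
  induction β generalizing G with
  | nil => rfl
  | cons m β ih =>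
    rw [addStrips_cons, addStrip_ite_snd_eq_zero, ih fun u => G (u + m), List.sum_cons]
    simp only [add_assoc, add_comm β.sum]

lemma addStrips_ite_fst_eq_zero (β : List ℕ) (G : ℕ → ℕ → A) :
    addStrips β (fun u v => if u = 0 then G u v else 0) =
      fun u v => if u = 0 then G u (v + β.sum) else 0 := by
  induction β generalizing G with
  | nil => rfl
  | cons m β ih =>
    rw [addStrips_cons, addStrip_ite_fst_eq_zero, ih fun u v => G u (v + m), List.sum_cons]
    simp only [add_assoc, add_comm β.sum]

lemma addStrips_cons_removeBox_one_zero (m : ℕ) (β : List ℕ) (F : ℕ → ℕ → A) :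
    addStrips ((m + 1) :: β) (removeBox F) 1 0 =
      addStrip m F (1 + β.sum) 0 + addStrips β (removeBox (addStrip (m + 1) F)) 1 0 := by
  rw [addStrips_cons, addStrip_removeBox, addStrips_add, addStrips_add,
    addStrips_ite_fst_eq_zero, addStrips_ite_snd_eq_zero]
  simp [add_comm]

end TwoRowAlgebra

section Antisymmetric

variable {A : Type*} [AddCommGroup A]

/-- Antisymmetry under exchanging the two variables. -/
def IsAntisymmetric (F : ℕ → ℕ → A) : Prop := ∀ u v, F u v = -F v u

protected lemma IsAntisymmetric.addStrip {F : ℕ → ℕ → A} (hF : IsAntisymmetric F) (m : ℕ) :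
    IsAntisymmetric (addStrip m F) := fun u v => by
  rw [addStrip, addStrip, ← Finset.sum_neg_distrib,
    ← Finset.Nat.sum_antidiagonal_swap]
  exact Finset.sum_congr rfl fun p _ => hF _ _

protected lemma IsAntisymmetric.removeBox {F : ℕ → ℕ → A} (hF : IsAntisymmetric F) :
    IsAntisymmetric (removeBox F) := fun u v => by
  rw [removeBox, removeBox, neg_add, add_comm]
  congr 1 <;> split_ifs <;> simp [hF u, hF (u - 1)]

protected lemma IsAntisymmetric.add {F G : ℕ → ℕ → A} (hF : IsAntisymmetric F)
    (hG : IsAntisymmetric G) : IsAntisymmetric (F + G) := fun u v => by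
  rw [Pi.add_apply, Pi.add_apply, Pi.add_apply, Pi.add_apply, hF, hG, neg_add]

protected lemma IsAntisymmetric.addStrips {F : ℕ → ℕ → A} (hF : IsAntisymmetric F) (β : List ℕ) :
    IsAntisymmetric (addStrips β F) := by
  induction β generalizing F with
  | nil => exact hF
  | cons m _ ih => exact ih (hF.addStrip m)

lemma IsAntisymmetric.addStrip_one_zero [IsAddTorsionFree A] {F : ℕ → ℕ → A}
    (hF : IsAntisymmetric F) (m : ℕ) : addStrip m F 1 0 = F (1 + m) 0 := by
  rcases m with - | m
  · rw [addStrip_zero]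
  · have diag : addStrip m F 1 1 = 0 := self_eq_neg.mp (hF.addStrip m 1 1)
    rw [addStrip, Finset.Nat.sum_antidiagonal_succ']
    simpa [addStrip, add_comm] using diag

end Antisymmetric

/-- The signed number of ways to reduce the shifted partition `(u, v) = (λ₁ + 1, λ₂)` to the empty
partition in `N` steps that each add or remove a box, extended antisymmetrically. -/
def oscillatingCount : ℕ → ℕ → ℕ → ℤ
  | 0 => fun u v => (if u = 1 ∧ v = 0 then 1 else 0) - if u = 0 ∧ v = 1 then 1 else 0
  | N + 1 => addStrip 1 (oscillatingCount N) + removeBox (oscillatingCount N)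

lemma isAntisymmetric_oscillatingCount (N : ℕ) : IsAntisymmetric (oscillatingCount N) := by
  induction N with
  | zero => intro u v; simp only [oscillatingCount]; grind
  | succ N ih => exact (ih.addStrip 1).add ih.removeBox

lemma addStrips_oscillatingCount_zero (β : List ℕ) :
    addStrips β (oscillatingCount 0) 1 0 = if β.sum = 0 then 1 else 0 := by
  have split : oscillatingCount 0 = (fun u v => if v = 0 then if u = 1 then 1 else 0 else 0) +
      fun u v => if u = 0 then if v = 1 then -1 else 0 else 0 := by
    funext u v
    simp only [oscillatingCount, Pi.add_apply]
    grind
  rw [split, addStrips_add, addStrips_ite_snd_eq_zero β fun u _ => if u = 1 then 1 else 0,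
    addStrips_ite_fst_eq_zero β fun _ v => if v = 1 then -1 else 0]
  simp

lemma addStrips_oscillatingCount_succ (β : List ℕ) (N : ℕ) :
    addStrips β (oscillatingCount (N + 1)) = addStrips (β ++ [1]) (oscillatingCount N) +
      addStrips β (removeBox (oscillatingCount N)) := by
  rw [oscillatingCount, addStrips_add, addStrips_addStrip, addStrips_append]
  rfl

/-! ### Noncrossing paths -/

section Paths

lemma pathHeight_append (l r : List Bool) (i : ℕ) :
    pathHeight (l ++ r) i = pathHeight l i + pathHeight r (i - l.length) := by
  simp only [pathHeight, List.take_append, List.count_append, Nat.cast_add]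
  ring

lemma pathHeight_of_length_le {l : List Bool} {i : ℕ} (h : l.length ≤ i) :
    pathHeight l i = pathHeight l l.length := by
  rw [pathHeight, pathHeight, List.take_of_length_le h, List.take_length]

@[simp]
lemma pathHeight_zero (l : List Bool) : pathHeight l 0 = 0 := by simp [pathHeight]

lemma pathHeight_singleton {i : ℕ} (hi : i ≠ 0) (x : Bool) :
    pathHeight [x] i = if x then 1 else -1 := by
  rw [pathHeight, List.take_of_length_le (by simpa using Nat.one_le_iff_ne_zero.2 hi)]
  cases x <;> simp

lemma pathHeight_replicate_false (k i : ℕ) :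
    pathHeight (List.replicate k false) i = -(min i k : ℕ) := by
  simp [pathHeight, List.take_replicate, List.count_replicate]

lemma forall_pathHeight_append (P : ℤ → ℤ → Prop) {N : ℕ} {s t : List Bool} (hs : s.length = N)
    (ht : t.length = N) (s' t' : List Bool) :
    (∀ i, P (pathHeight (s ++ s') i) (pathHeight (t ++ t') i)) ↔
      (∀ i, P (pathHeight s i) (pathHeight t i)) ∧
        ∀ i, P (pathHeight s N + pathHeight s' i) (pathHeight t N + pathHeight t' i) := by
  have initial {i : ℕ} (hi : i ≤ N) (l l' : List Bool) (hl : l.length = N) :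
      pathHeight (l ++ l') i = pathHeight l i := by
    rw [pathHeight_append, hl, Nat.sub_eq_zero_of_le hi, pathHeight_zero, add_zero]
  have final (i : ℕ) (l l' : List Bool) (hl : l.length = N) :
      pathHeight (l ++ l') (N + i) = pathHeight l N + pathHeight l' i := by
    rw [pathHeight_append, hl, Nat.add_sub_cancel_left, ← hl,
      pathHeight_of_length_le (Nat.le_add_right _ i)]
  refine ⟨fun h => ⟨fun i => ?_, fun i => ?_⟩, fun ⟨h, h'⟩ i => ?_⟩
  · rcases le_total i N with hi | hi
    · simpa only [initial hi, hs, ht] using h i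
    · rw [pathHeight_of_length_le (hs.trans_le hi), pathHeight_of_length_le (ht.trans_le hi),
        hs, ht]
      simpa only [initial le_rfl, hs, ht] using h N
  · simpa only [final, hs, ht] using h (N + i)
  · rcases le_total i N with hi | hi
    · simpa only [initial hi, hs, ht] using h i
    · obtain ⟨j, rfl⟩ := Nat.exists_eq_add_of_le hi
      simpa only [final, hs, ht] using h' j

/-- The pairs of noncrossing nonnegative paths with `N` steps ending at the heights `h₀ ≤ h₁`. -/
def noncrossingPaths (N : ℕ) (h₀ h₁ : ℤ) : Set (List Bool × List Bool) :=
  {st | (st.1.length = N ∧ st.2.length = N) ∧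
    (∀ i, 0 ≤ pathHeight st.1 i ∧ pathHeight st.1 i ≤ pathHeight st.2 i) ∧
    pathHeight st.1 N = h₀ ∧ pathHeight st.2 N = h₁}

lemma finite_noncrossingPaths (N : ℕ) (h₀ h₁ : ℤ) : (noncrossingPaths N h₀ h₁).Finite :=
  ((List.finite_length_eq Bool N).prod (List.finite_length_eq Bool N)).subset fun _ h => h.1

lemma noncrossingPaths_eq_empty (N : ℕ) {h₀ h₁ : ℤ} (h : ¬(0 ≤ h₀ ∧ h₀ ≤ h₁)) :
    noncrossingPaths N h₀ h₁ = ∅ :=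
  Set.eq_empty_iff_forall_notMem.2 fun st ⟨_, hst, hh₀, hh₁⟩ => h (by simpa [hh₀, hh₁] using hst N)

/-- Both paths of a pair extended by one step each. -/
def extendPaths (xy : Bool × Bool) (st : List Bool × List Bool) : List Bool × List Bool :=
  (st.1 ++ [xy.1], st.2 ++ [xy.2])

lemma extendPaths_eq_extendPaths {xy xy' : Bool × Bool} {st st' : List Bool × List Bool} :
    extendPaths xy st = extendPaths xy' st' ↔ xy = xy' ∧ st = st' := by
  simp only [extendPaths, Prod.ext_iff, ← List.concat_eq_append, List.concat_inj]
  tauto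

lemma extendPaths_mem_noncrossingPaths {N : ℕ} {h₀ h₁ : ℤ} (h : 0 ≤ h₀ ∧ h₀ ≤ h₁)
    (xy : Bool × Bool) (st : List Bool × List Bool) :
    extendPaths xy st ∈ noncrossingPaths (N + 1) h₀ h₁ ↔
      st ∈ noncrossingPaths N (h₀ - if xy.1 then 1 else -1) (h₁ - if xy.2 then 1 else -1) := by
  simp only [noncrossingPaths, extendPaths, Set.mem_ofPred_eq, List.length_append,
    List.length_singleton, Nat.add_right_cancel_iff]
  refine and_congr_right fun ⟨hs, ht⟩ => ?_
  have final {l : List Bool} (hl : l.length = N) (x : Bool) :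
      pathHeight (l ++ [x]) (N + 1) = pathHeight l N + if x then 1 else -1 := by
    rw [pathHeight_append, hl, Nat.add_sub_cancel_left, pathHeight_singleton one_ne_zero,
      pathHeight_of_length_le (hl.trans_le N.le_succ), hl]
  rw [final hs, final ht, forall_pathHeight_append (fun a b => 0 ≤ a ∧ a ≤ b) hs ht, and_assoc]
  refine and_congr_right fun hst => ⟨by omega, fun hfinal => ⟨fun i => ?_, by omega⟩⟩
  rcases eq_or_ne i 0 with rfl | hi
  · simpa using hst N
  · simp only [pathHeight_singleton hi]
    omega

lemma noncrossingPaths_succ (N : ℕ) {h₀ h₁ : ℤ} (h : 0 ≤ h₀ ∧ h₀ ≤ h₁) :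
    noncrossingPaths (N + 1) h₀ h₁ = ⋃ xy : Bool × Bool, extendPaths xy ''
      noncrossingPaths N (h₀ - if xy.1 then 1 else -1) (h₁ - if xy.2 then 1 else -1) := by
  ext ⟨s, t⟩
  simp only [Set.mem_iUnion, Set.mem_image, ← extendPaths_mem_noncrossingPaths h]
  refine ⟨fun hst => ?_, fun ⟨_, _, hst, hextend⟩ => hextend ▸ hst⟩
  have hs : s ≠ [] := List.ne_nil_of_length_eq_add_one hst.1.1
  have ht : t ≠ [] := List.ne_nil_of_length_eq_add_one hst.1.2
  have hextend : extendPaths (s.getLast hs, t.getLast ht) (s.dropLast, t.dropLast) = (s, t) :=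
    Prod.ext (List.dropLast_append_getLast hs) (List.dropLast_append_getLast ht)
  exact ⟨_, _, hextend.symm ▸ hst, hextend⟩

lemma ncard_noncrossingPaths_succ (N : ℕ) {h₀ h₁ : ℤ} (h : 0 ≤ h₀ ∧ h₀ ≤ h₁) :
    (noncrossingPaths (N + 1) h₀ h₁).ncard =
      (noncrossingPaths N (h₀ - 1) (h₁ - 1)).ncard + (noncrossingPaths N (h₀ - 1) (h₁ + 1)).ncard +
      ((noncrossingPaths N (h₀ + 1) (h₁ - 1)).ncard +
        (noncrossingPaths N (h₀ + 1) (h₁ + 1)).ncard) := by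
  rw [noncrossingPaths_succ N h, Set.ncard_iUnion_of_finite, finsum_eq_sum_of_fintype]
  · have hinj (xy : Bool × Bool) : (extendPaths xy).Injective := fun _ _ hst =>
      (extendPaths_eq_extendPaths.1 hst).2
    simp [Set.ncard_image_of_injective _ (hinj _), Fintype.sum_prod_type]
  · exact fun _ => (finite_noncrossingPaths _ _ _).image _
  · rintro xy xy' hne
    refine Set.disjoint_left.2 ?_
    rintro _ ⟨_, _, rfl⟩ ⟨_, _, heq⟩
    exact hne (extendPaths_eq_extendPaths.1 heq).1.symm

lemma noncrossingPaths_zero (h₀ h₁ : ℤ) :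
    noncrossingPaths 0 h₀ h₁ = if h₀ = 0 ∧ h₁ = 0 then {([], [])} else ∅ := by
  ext st
  simp only [noncrossingPaths, Set.mem_ofPred_eq, List.length_eq_zero_iff, pathHeight_zero]
  split_ifs with h
  · rw [Set.mem_singleton_iff, Prod.ext_iff]
    exact ⟨And.left, fun hst => ⟨hst, by simp [hst, pathHeight], h.1.symm, h.2.symm⟩⟩
  · exact iff_of_false (fun hst => h ⟨hst.2.2.1.symm, hst.2.2.2.symm⟩) (Set.notMem_empty st)

/-- The two heights of the paths are `λ₁ - λ₂` and `λ₁ + λ₂`, so that a pair of simultaneous steps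
adds or removes a box of `λ`. -/
lemma ncard_noncrossingPaths (N : ℕ) {u v : ℕ} (h : v ≤ u) :
    ((noncrossingPaths N (u - 1 - v) (u - 1 + v)).ncard : ℤ) = oscillatingCount N u v := by
  induction N generalizing u v with
  | zero =>
    rw [noncrossingPaths_zero, oscillatingCount]
    split_ifs <;> simp only [Set.ncard_singleton, Set.ncard_empty] <;> omega
  | succ N ih =>
    rcases h.eq_or_lt with rfl | hlt
    · rw [self_eq_neg.1 (isAntisymmetric_oscillatingCount (N + 1) v v),
        noncrossingPaths_eq_empty _ (by omega), Set.ncard_empty, Nat.cast_zero]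
    obtain ⟨w, rfl⟩ := Nat.exists_eq_add_one_of_ne_zero hlt.ne_bot
    rw [show ((w + 1 : ℕ) : ℤ) - 1 = w by simp, ncard_noncrossingPaths_succ N (by omega),
      oscillatingCount]
    have heights {u' v' : ℕ} (h' : v' ≤ u') (h₀ h₁ : ℤ) (hh₀ : h₀ = u' - 1 - v')
        (hh₁ : h₁ = u' - 1 + v') :
        ((noncrossingPaths N h₀ h₁).ncard : ℤ) = oscillatingCount N u' v' := by
      rw [hh₀, hh₁, ih h']
    have removeSnd : ((noncrossingPaths N (w - v + 1) (w + v - 1)).ncard : ℤ) =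
        if v = 0 then 0 else oscillatingCount N (w + 1) (v - 1) := by
      split_ifs with hv
      · rw [noncrossingPaths_eq_empty _ (by omega), Set.ncard_empty, Nat.cast_zero]
      · exact heights (by omega) _ _ (by omega) (by omega)
    push_cast
    rw [heights (u' := w) (v' := v) (by omega) _ _ (by omega) (by omega),
      heights (u' := w + 1) (v' := v + 1) (by omega) _ _ (by omega) (by omega), removeSnd,
      heights (u' := w + 2) (v' := v) (by omega) _ _ (by omega) (by omega)]
    rw [Pi.add_apply, Pi.add_apply, addStrip_one, removeBox, if_neg w.succ_ne_zero,
      Nat.add_sub_cancel]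
    ring

lemma isDyckPath_iff {n : ℕ} {t : List Bool} : IsDyckPath n t ↔
    t.length = 2 * n ∧ (∀ i, 0 ≤ pathHeight t i) ∧ pathHeight t (2 * n) = 0 := by
  have hcount : t.count true + t.count false = t.length := List.count_true_add_count_false t
  rw [IsDyckPath, and_congr_right_iff]
  intro ht
  simp only [pathHeight, ← ht, List.take_length, sub_nonneg, Nat.cast_le]
  exact and_comm.trans (and_congr_right fun _ => by omega)

/-- The pairs of noncrossing Dyck paths of semilength `n + k` that both end with `k` south steps. -/
def dyckPairs (n k : ℕ) : Set (List Bool × List Bool) :=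
  {st : List Bool × List Bool |
      IsDyckPath (n + k) st.1 ∧ IsDyckPath (n + k) st.2 ∧ WeaklyBelow st.1 st.2 ∧
      st.1.drop (2 * (n + k) - k) = List.replicate k false ∧
      st.2.drop (2 * (n + k) - k) = List.replicate k false}

/-- Appends `k` south steps to both paths. -/
def appendSouthSteps (k : ℕ) (st : List Bool × List Bool) : List Bool × List Bool :=
  (st.1 ++ List.replicate k false, st.2 ++ List.replicate k false)

lemma appendSouthSteps_injective (k : ℕ) : (appendSouthSteps k).Injective := fun st st' h => by
  simpa [appendSouthSteps, Prod.ext_iff] using h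

lemma isDyckPath_append_replicate_false {n k : ℕ} {l : List Bool} (hl : l.length = 2 * n + k) :
    IsDyckPath (n + k) (l ++ List.replicate k false) ↔
      (∀ i, 0 ≤ pathHeight l i) ∧ pathHeight l (2 * n + k) = k := by
  have hlen : 2 * (n + k) = 2 * n + k + k := by ring
  have final : pathHeight (l ++ List.replicate k false) (2 * (n + k)) =
      pathHeight l (2 * n + k) - k := by
    rw [pathHeight_append, hlen, pathHeight_of_length_le (by omega), hl, Nat.add_sub_cancel_left,
      pathHeight_replicate_false, min_self, sub_eq_add_neg]
  rw [isDyckPath_iff, forall_pathHeight_append (fun a _ => 0 ≤ a) hl hl _ (List.replicate k false),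
    final, and_iff_right (by simp [hl, hlen]), and_assoc]
  simp only [pathHeight_replicate_false]
  exact and_congr_right fun _ => ⟨fun h => by omega, fun h => ⟨fun i => by omega, by omega⟩⟩

lemma noncrossing_appendSouthSteps_iff {n k : ℕ} {st : List Bool × List Bool}
    (hs : st.1.length = 2 * n + k) (ht : st.2.length = 2 * n + k) :
    IsDyckPath (n + k) (appendSouthSteps k st).1 ∧ IsDyckPath (n + k) (appendSouthSteps k st).2 ∧
      WeaklyBelow (appendSouthSteps k st).1 (appendSouthSteps k st).2 ↔
    st ∈ noncrossingPaths (2 * n + k) k k := by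
  simp only [appendSouthSteps, WeaklyBelow, isDyckPath_append_replicate_false hs,
    isDyckPath_append_replicate_false ht, forall_pathHeight_append (· ≤ ·) hs ht,
    add_le_add_iff_right, forall_const, noncrossingPaths, Set.mem_ofPred_eq, forall_and]
  have trans (h₀ : ∀ i, 0 ≤ pathHeight st.1 i) (h : ∀ i, pathHeight st.1 i ≤ pathHeight st.2 i)
    (i : ℕ) : 0 ≤ pathHeight st.2 i := (h₀ i).trans (h i)
  grind

lemma dyckPairs_eq_image (n k : ℕ) : dyckPairs n k =
    appendSouthSteps k '' noncrossingPaths (2 * n + k) k k := by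
  have hlen : 2 * (n + k) - k = 2 * n + k := by omega
  rw [dyckPairs, hlen]
  ext ⟨s, t⟩
  constructor
  · rintro ⟨hs, ht, hst, hs', ht'⟩
    have happend : appendSouthSteps k (s.take (2 * n + k), t.take (2 * n + k)) = (s, t) :=
      Prod.ext (by simp only [appendSouthSteps, ← hs', List.take_append_drop])
        (by simp only [appendSouthSteps, ← ht', List.take_append_drop])
    have hslen := hs.1
    have htlen := ht.1
    refine ⟨_, (noncrossing_appendSouthSteps_iff ?_ ?_).1 ?_, happend⟩
    · grind
    · grind
    · rw [happend]
      exact ⟨hs, ht, hst⟩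
  · rintro ⟨⟨s', t'⟩, hst, happend⟩
    obtain ⟨hs, ht, hle⟩ := (noncrossing_appendSouthSteps_iff hst.1.1 hst.1.2).2 hst
    rw [happend] at hs ht hle
    obtain ⟨rfl, rfl⟩ := Prod.ext_iff.1 happend
    exact ⟨hs, ht, hle, List.drop_left' hst.1.1, List.drop_left' hst.1.2⟩

lemma ncard_dyckPairs (n k : ℕ) :
    ((dyckPairs n k).ncard : ℤ) = oscillatingCount (2 * n + k) (k + 1) 0 := by
  rw [dyckPairs_eq_image, Set.ncard_image_of_injective _ (appendSouthSteps_injective k),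
    ← ncard_noncrossingPaths _ (Nat.zero_le _)]
  simp

end Paths

/-! ### Truncated matchings -/

section Truncations

/-- `M` consists of the arcs with opener at most `N` of a matching that has `s` fixed points in
`[N]` and satisfies the two avoidance conditions. The list `B` holds their closers beyond `N`, cut
into blocks within each of which the openers must decrease as the closers increase. -/
structure IsTruncation (N s : ℕ) (B : List (List ℕ)) (M : Finset (ℕ × ℕ)) : Prop where
  bounds : ∀ ⦃a x⦄, (a, x) ∈ M → 1 ≤ a ∧ a ≤ N ∧ a < x ∧ (x ≤ N ∨ x ∈ B.flatten)
  ne : ∀ ⦃a x b y⦄, (a, x) ∈ M → (b, y) ∈ M → a ≠ y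
  eq_iff : ∀ ⦃a x b y⦄, (a, x) ∈ M → (b, y) ∈ M → (a = b ↔ x = y)
  covers : ∀ ⦃x⦄, x ∈ B.flatten → ∃ a, (a, x) ∈ M
  card_fixedPts : (fixedPts N M).card = s
  not_crossing : ∀ ⦃a b c x y z⦄, (a, x) ∈ M → (b, y) ∈ M → (c, z) ∈ M →
    a < b → b < c → c < x → x < y → ¬ y < z
  not_crossing_fixed : ∀ ⦃a b c x y⦄, (a, x) ∈ M → (b, y) ∈ M → a < b → b < c → c < x → x < y →
    c ∉ fixedPts N M
  nested : ∀ ⦃l⦄, l ∈ B → ∀ ⦃a b x y⦄, x ∈ l → y ∈ l → x < y → (a, x) ∈ M → (b, y) ∈ M → ¬ a < b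

/-- `B` is a possible list of blocks of closers beyond `N`: it lists them in decreasing order. -/
structure IsPending (N : ℕ) (B : List (List ℕ)) : Prop where
  lt : ∀ ⦃x⦄, x ∈ B.flatten → N < x
  pairwise : B.flatten.Pairwise (· > ·)

variable {N s j : ℕ} {b : List ℕ} {B L R : List (List ℕ)} {M : Finset (ℕ × ℕ)}

lemma IsPending.append_singleton (hB : IsPending (N + 1) B) : IsPending N (B ++ [[N + 1]]) where
  lt := by have := hB.lt; grind
  pairwise := by have := hB.lt; have := hB.pairwise; simp only [List.flatten_append]; grind

lemma IsPending.merge (hB : IsPending (N + 1) B) : IsPending N [B.flatten] where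
  lt := by have := hB.lt; grind
  pairwise := by simpa using hB.pairwise

lemma IsPending.split (hB : IsPending (N + 1) (L ++ (b ++ [j]) :: R)) :
    IsPending N (L ++ [b, R.flatten]) := by
  have hsub : (L ++ [b, R.flatten]).flatten.Sublist (L ++ (b ++ [j]) :: R).flatten := by
    simp
  exact ⟨fun x hx => (Nat.lt_succ_self N).trans (hB.lt (hsub.subset hx)), hB.pairwise.sublist hsub⟩

lemma IsPending.last_lt (hB : IsPending N (L ++ (b ++ [j]) :: R)) {x : ℕ}
    (hx : x ∈ L.flatten ∨ x ∈ b) : j < x := by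
  have := hB.pairwise
  simp only [List.flatten_append, List.flatten_cons, List.pairwise_append] at this
  rcases hx with hx | hx
  · exact this.2.2 x hx j (by simp)
  · exact this.2.1.1.2.2 x hx j (by simp)

lemma IsPending.lt_last (hB : IsPending N (L ++ (b ++ [j]) :: R)) {x : ℕ}
    (hx : x ∈ R.flatten) : x < j := by
  have := hB.pairwise
  simp only [List.flatten_append, List.flatten_cons, List.pairwise_append] at this
  exact this.2.1.2.2 j (by simp) x hx

lemma IsPending.last_le (hB : IsPending N (L ++ (b ++ [j]) :: R)) {l : List ℕ}
    (hl : l ∈ L ++ (b ++ [j]) :: R) (hj : j ∈ l) {x : ℕ} (hx : x ∈ l) : j ≤ x := by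
  rw [List.mem_append, List.mem_cons] at hl
  rcases hl with hl | rfl | hl
  · exact absurd (hB.last_lt (Or.inl (List.mem_flatten_of_mem hl hj))) j.lt_irrefl
  · rcases List.mem_append.1 hx with hx | hx
    · exact (hB.last_lt (Or.inr hx)).le
    · exact (List.mem_singleton.1 hx).ge
  · exact absurd (hB.lt_last (List.mem_flatten_of_mem hl hj)) j.lt_irrefl

lemma mem_fixedPts {x : ℕ} :
    x ∈ fixedPts N M ↔ (1 ≤ x ∧ x ≤ N) ∧ (∀ y, (x, y) ∉ M) ∧ ∀ y, (y, x) ∉ M := by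
  simp only [fixedPts, Finset.mem_filter, Finset.mem_Icc, Prod.forall]
  grind

lemma fixedPts_succ_of_mem {p : ℕ} (h : (p, N + 1) ∈ M) :
    fixedPts (N + 1) M = fixedPts N M := by
  ext x
  grind [mem_fixedPts]

lemma fixedPts_succ_of_mem_fixedPts (h : N + 1 ∈ fixedPts (N + 1) M) :
    fixedPts (N + 1) M = insert (N + 1) (fixedPts N M) := by
  ext x
  grind [mem_fixedPts]

lemma fixedPts_succ_insert (hj : N + 1 < j) (hM : ∀ ⦃a x⦄, (a, x) ∈ M → a ≤ N) :
    fixedPts (N + 1) (insert (N + 1, j) M) = fixedPts N M := by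
  have (y : ℕ) : (N + 1, y) ∉ M := fun hy => N.not_succ_le_self (hM hy)
  ext x
  grind [mem_fixedPts]

lemma isTruncation_closer (hB : IsPending (N + 1) B) :
    (IsTruncation (N + 1) s B M ∧ ∃ p, (p, N + 1) ∈ M) ↔
      IsTruncation N s (B ++ [[N + 1]]) M := by
  have := hB.lt
  constructor
  · rintro ⟨h, p, hp⟩
    have hfixed := fixedPts_succ_of_mem hp
    exact {
      bounds := by have := h.bounds; have := h.ne; grind
      ne := h.ne
      eq_iff := h.eq_iff
      covers := by have := h.covers; grind
      card_fixedPts := hfixed ▸ h.card_fixedPts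
      not_crossing := h.not_crossing
      not_crossing_fixed := hfixed ▸ h.not_crossing_fixed
      nested := by have := h.nested; grind }
  · intro h
    obtain ⟨p, hp⟩ := h.covers (x := N + 1) (by simp)
    have hfixed := fixedPts_succ_of_mem hp
    exact ⟨{
      bounds := by have := h.bounds; grind
      ne := h.ne
      eq_iff := h.eq_iff
      covers := fun x hx => h.covers (by simp [hx])
      card_fixedPts := hfixed ▸ h.card_fixedPts
      not_crossing := h.not_crossing
      not_crossing_fixed := hfixed ▸ h.not_crossing_fixed
      nested := by have := h.nested; grind }, p, hp⟩

lemma isTruncation_fixed (hB : IsPending (N + 1) B) :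
    (IsTruncation (N + 1) (s + 1) B M ∧ N + 1 ∈ fixedPts (N + 1) M) ↔
      IsTruncation N s [B.flatten] M := by
  have := hB.lt
  constructor
  · rintro ⟨h, hN⟩
    have hfixed := fixedPts_succ_of_mem_fixedPts hN
    exact {
      bounds := by have := h.bounds; grind [mem_fixedPts]
      ne := h.ne
      eq_iff := h.eq_iff
      covers := by have := h.covers; grind
      card_fixedPts := by have := h.card_fixedPts; grind [mem_fixedPts]
      not_crossing := h.not_crossing
      not_crossing_fixed := by have := h.not_crossing_fixed; grind
      nested := by
        rintro l hl a b x y hx hy hxy ha hb hab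
        rw [List.mem_singleton.1 hl] at hx hy
        refine h.not_crossing_fixed ha hb hab ?_ (hB.lt hx) hxy hN
        have := h.bounds hb
        grind [mem_fixedPts] }
  · intro h
    have hN : N + 1 ∈ fixedPts (N + 1) M := by have := h.bounds; grind [mem_fixedPts]
    have hfixed := fixedPts_succ_of_mem_fixedPts hN
    exact ⟨{
      bounds := by have := h.bounds; grind
      ne := h.ne
      eq_iff := h.eq_iff
      covers := by have := h.covers; grind
      card_fixedPts := by have := h.card_fixedPts; grind [mem_fixedPts]
      not_crossing := h.not_crossing
      not_crossing_fixed := by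
        intro a b c x y ha hb hab hbc hcx hxy hc
        rw [hfixed, Finset.mem_insert] at hc
        rcases hc with rfl | hc
        · have hx := h.bounds ha
          have hy := h.bounds hb
          exact h.nested (List.mem_singleton_self _) (by grind) (by grind) hxy ha hb hab
        · exact h.not_crossing_fixed ha hb hab hbc hcx hxy hc
      nested := fun l hl a b x y hx hy => h.nested (List.mem_singleton_self _)
        (List.mem_flatten_of_mem hl hx) (List.mem_flatten_of_mem hl hy) }, hN⟩

lemma IsTruncation.of_insert (hB : IsPending (N + 1) (L ++ (b ++ [j]) :: R))
    (h : IsTruncation (N + 1) s (L ++ (b ++ [j]) :: R) (insert (N + 1, j) M))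
    (hM : (N + 1, j) ∉ M) : IsTruncation N s (L ++ [b, R.flatten]) M := by
  have hj : (N + 1, j) ∈ insert (N + 1, j) M := Finset.mem_insert_self _ _
  have hmem {p} (hp : p ∈ M) : p ∈ insert (N + 1, j) M := Finset.mem_insert_of_mem hp
  have hne ⦃a x⦄ (ha : (a, x) ∈ M) : a ≤ N ∧ x ≠ j ∧ x ≠ N + 1 := by
    have := h.bounds (hmem ha)
    have := h.ne hj (hmem ha)
    have := h.eq_iff (hmem ha) hj
    grind
  have hfixed : fixedPts (N + 1) (insert (N + 1, j) M) = fixedPts N M :=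
    fixedPts_succ_insert (hB.lt (by simp)) fun _ _ ha => (hne ha).1
  exact {
    bounds := by have := h.bounds; grind
    ne := fun _ _ _ _ ha hb => h.ne (hmem ha) (hmem hb)
    eq_iff := fun _ _ _ _ ha hb => h.eq_iff (hmem ha) (hmem hb)
    covers := by
      intro x hx
      obtain ⟨a, ha⟩ := h.covers (x := x) (by grind)
      have hxj : x ≠ j := by
        have := hB.lt_last (x := x)
        have := hB.last_lt (x := x)
        grind
      exact ⟨a, by grind⟩
    card_fixedPts := hfixed ▸ h.card_fixedPts
    not_crossing := fun _ _ _ _ _ _ ha hb hc => h.not_crossing (hmem ha) (hmem hb) (hmem hc)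
    not_crossing_fixed := fun _ _ _ _ _ ha hb =>
      hfixed ▸ h.not_crossing_fixed (hmem ha) (hmem hb)
    nested := by
      intro l hl a c x y hx hy hxy ha hc
      rw [List.mem_append, List.mem_pair] at hl
      rcases hl with hl | rfl | rfl
      · exact h.nested (by simp [hl]) hx hy hxy (hmem ha) (hmem hc)
      · exact h.nested (l := l ++ [j]) (by simp) (by simp [hx]) (by simp [hy]) hxy (hmem ha)
          (hmem hc)
      · exact fun hac => h.not_crossing (hmem ha) (hmem hc) hj hac (Nat.lt_succ_of_le (hne hc).1)
          (hB.lt (by simp_all)) hxy (hB.lt_last hy) }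

lemma IsTruncation.closer_ne (h : IsTruncation N s (L ++ [b, R.flatten]) M)
    (hB : IsPending (N + 1) (L ++ (b ++ [j]) :: R)) {a x : ℕ} (ha : (a, x) ∈ M) :
    x ≠ j ∧ x ≠ N + 1 := by
  have := h.bounds ha
  have := hB.lt (x := x)
  have := hB.lt (x := j)
  have := hB.lt_last (x := x)
  have := hB.last_lt (x := x)
  grind

lemma IsTruncation.closer_mem_flatten (h : IsTruncation N s (L ++ [b, R.flatten]) M)
    {N' : ℕ} (hB : IsPending N' (L ++ (b ++ [j]) :: R)) {a x : ℕ} (ha : (a, x) ∈ M) (hNx : N < x)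
    (hxj : x < j) : x ∈ R.flatten := by
  have := h.bounds ha
  have := hB.last_lt (x := x)
  grind

protected lemma IsTruncation.insert (hB : IsPending (N + 1) (L ++ (b ++ [j]) :: R))
    (h : IsTruncation N s (L ++ [b, R.flatten]) M) :
    IsTruncation (N + 1) s (L ++ (b ++ [j]) :: R) (insert (N + 1, j) M) := by
  have hj : N + 1 < j := hB.lt (by simp)
  have hclosers ⦃a x⦄ (ha : (a, x) ∈ M) := h.closer_ne hB ha
  have hpending ⦃a x⦄ (ha : (a, x) ∈ M) := h.closer_mem_flatten hB ha
  have hfixed : fixedPts (N + 1) (insert (N + 1, j) M) = fixedPts N M :=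
    fixedPts_succ_insert hj fun _ _ ha => (h.bounds ha).2.1
  have hinsert {a x} (ha : (a, x) ∈ insert (N + 1, j) M) :
      (a, x) ∈ M ∨ a = N + 1 ∧ x = j := by grind
  have hearlier {a x c y} (ha : (a, x) ∈ insert (N + 1, j) M)
      (hc : (c, y) ∈ insert (N + 1, j) M) (hac : a < c) : (a, x) ∈ M := by
    have := h.bounds (a := c) (x := y)
    grind
  exact {
    bounds := by have := h.bounds; grind
    ne := by have := h.ne; have := h.bounds; grind
    eq_iff := by have := h.eq_iff; have := h.bounds; grind
    covers := by intro x hx; have := h.covers (x := x); grind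
    card_fixedPts := hfixed ▸ h.card_fixedPts
    not_crossing := by
      intro a c e x y z ha hc he hac hce hex hxy hyz
      replace ha := hearlier ha hc hac
      replace hc := hearlier hc he hce
      rcases hinsert he with he | ⟨rfl, rfl⟩
      · exact h.not_crossing ha hc he hac hce hex hxy hyz
      · exact h.nested (l := R.flatten) (by simp) (hpending ha (by omega) (by omega))
          (hpending hc (by omega) hyz) hxy ha hc hac
    not_crossing_fixed := by
      rw [hfixed]; have := h.not_crossing_fixed; grind [mem_fixedPts]
    nested := by
      intro l hl a c x y hx hy hxy ha hc hac
      replace ha := hearlier ha hc hac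
      rcases hinsert hc with hc | ⟨-, rfl⟩
      · rw [List.mem_append, List.mem_cons] at hl
        rcases hl with hl | rfl | hl
        · exact h.nested (by simp [hl]) hx hy hxy ha hc hac
        · exact h.nested (l := b) (by simp) (by grind) (by grind) hxy ha hc hac
        · exact h.nested (l := R.flatten) (by simp) (List.mem_flatten_of_mem hl hx)
            (List.mem_flatten_of_mem hl hy) hxy ha hc hac
      · exact (hB.last_le hl hy hx).not_gt hxy }

lemma IsTruncation.notMem_of_mem (hB : IsPending (N + 1) (L ++ (b ++ [j]) :: R))
    (h : IsTruncation (N + 1) s (L ++ (b ++ [j]) :: R) M) {i : ℕ} (hi : i ∈ b) :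
    (N + 1, i) ∉ M := by
  intro hM
  obtain ⟨a, ha⟩ := h.covers (x := j) (by simp)
  have hji : j < i := hB.last_lt (Or.inr hi)
  have haN : a ≠ N + 1 := fun haN => hji.ne ((h.eq_iff ha hM).1 haN)
  exact h.nested (l := b ++ [j]) (by simp) (by simp) (by simp [hi]) hji ha hM
    ((h.bounds ha).2.1.lt_of_ne haN)

/-- The set of truncations to `[N]` with `s` fixed points and blocks `B` of pending closers. -/
def truncations (N s : ℕ) (B : List (List ℕ)) : Set (Finset (ℕ × ℕ)) := {M | IsTruncation N s B M}

lemma finite_truncations (N s : ℕ) (B : List (List ℕ)) : (truncations N s B).Finite := by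
  refine (Finset.finite_toSet
    (Finset.Icc 1 N ×ˢ (Finset.Icc 1 N ∪ B.flatten.toFinset)).powerset).subset fun M h => ?_
  rw [Finset.mem_coe, Finset.mem_powerset]
  intro p hp
  have := h.bounds (a := p.1) (x := p.2) hp
  simp only [Finset.mem_product, Finset.mem_union, Finset.mem_Icc, List.mem_toFinset]
  grind

/-- The truncations in which `N` is an opener whose closer belongs to the list `c`. -/
def truncationsOpeningTo (N s : ℕ) (B : List (List ℕ)) (c : List ℕ) : Set (Finset (ℕ × ℕ)) :=
  {M | IsTruncation N s B M ∧ ∃ j ∈ c, (N, j) ∈ M}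

lemma truncationsOpeningTo_append (N s : ℕ) (B : List (List ℕ)) (c d : List ℕ) :
    truncationsOpeningTo N s B (c ++ d) =
      truncationsOpeningTo N s B c ∪ truncationsOpeningTo N s B d := by
  ext M
  simp only [truncationsOpeningTo, Set.mem_union, Set.mem_ofPred_eq, List.mem_append]
  grind

lemma ncard_truncationsOpeningTo_append (N s : ℕ) (B : List (List ℕ)) {c d : List ℕ}
    (h : c.Disjoint d) : (truncationsOpeningTo N s B (c ++ d)).ncard =
      (truncationsOpeningTo N s B c).ncard + (truncationsOpeningTo N s B d).ncard := by
  have hfinite (c : List ℕ) : (truncationsOpeningTo N s B c).Finite :=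
    (finite_truncations N s B).subset fun _ hM => hM.1
  rw [truncationsOpeningTo_append, Set.ncard_union_eq _ (hfinite c) (hfinite d)]
  refine Set.disjoint_left.2 fun M ⟨hM, i, hi, hMi⟩ ⟨_, j, hj, hMj⟩ => ?_
  exact h hi ((hM.eq_iff hMi hMj).1 rfl ▸ hj)

lemma truncationsOpeningTo_block (s : ℕ) (hB : IsPending (N + 1) (L ++ (b ++ [j]) :: R)) :
    truncationsOpeningTo (N + 1) s (L ++ (b ++ [j]) :: R) (b ++ [j]) =
      insert (N + 1, j) '' truncations N s (L ++ [b, R.flatten]) := by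
  ext M
  constructor
  · rintro ⟨hM, i, hi, hMi⟩
    rcases List.mem_append.1 hi with hi | hi
    · exact absurd hMi (hM.notMem_of_mem hB hi)
    · rw [List.mem_singleton.1 hi] at hMi
      have hinsert := Finset.insert_erase hMi
      exact ⟨M.erase (N + 1, j), .of_insert hB (hinsert.symm ▸ hM) (Finset.notMem_erase _ _),
        hinsert⟩
  · rintro ⟨M, hM, rfl⟩
    exact ⟨hM.insert hB, j, by simp, Finset.mem_insert_self _ _⟩

lemma ncard_truncationsOpeningTo_block (s : ℕ) (hB : IsPending (N + 1) (L ++ (b ++ [j]) :: R)) :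
    (truncationsOpeningTo (N + 1) s (L ++ (b ++ [j]) :: R) (b ++ [j])).ncard =
      (truncations N s (L ++ [b, R.flatten])).ncard := by
  have hnotMem (M) (hM : M ∈ truncations N s (L ++ [b, R.flatten])) : (N + 1, j) ∉ M :=
    fun hj => N.not_succ_le_self (hM.bounds hj).2.1
  rw [truncationsOpeningTo_block s hB]
  refine Set.InjOn.ncard_image fun M hM M' hM' heq => ?_
  rw [← Finset.erase_insert (hnotMem M hM), heq, Finset.erase_insert (hnotMem M' hM')]

lemma ncard_truncationsOpeningTo_flatten
    (ih : ∀ B, IsPending N B → ((truncations N s B).ncard : ℤ) =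
      addStrips (s :: B.map List.length) (oscillatingCount N) 1 0)
    (hB : IsPending (N + 1) (L ++ R)) :
    ((truncationsOpeningTo (N + 1) s (L ++ R) R.flatten).ncard : ℤ) =
      addStrips (R.map List.length)
        (removeBox (addStrips (s :: L.map List.length) (oscillatingCount N))) 1 0 := by
  have hF := isAntisymmetric_oscillatingCount N
  induction R generalizing L with
  | nil =>
    have hdiag := self_eq_neg.1 (hF.addStrips (s :: L.map List.length) 0 0)
    change _ = removeBox _ 1 0
    simp [truncationsOpeningTo, removeBox, hdiag]
  | cons b R ihR =>
    have hassoc : L ++ b :: R = L ++ [b] ++ R := by simp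
    have hR := ihR (hassoc ▸ hB)
    rw [← hassoc, List.map_append, ← List.cons_append, addStrips_append] at hR
    rcases List.eq_nil_or_concat' b with rfl | ⟨b, j, rfl⟩
    · simpa [addStrips] using hR
    have hlength : ((b ++ [j]) :: R).map List.length = (b.length + 1) :: R.map List.length := by
      simp
    have hdisj : (b ++ [j]).Disjoint R.flatten := by
      intro x hx hxR
      have := hB.last_lt (x := x)
      have := hB.lt_last hxR
      grind
    have hblock : addStrips (s :: (L ++ [b, R.flatten]).map List.length) (oscillatingCount N) 1 0 =
        addStrip b.length (addStrips (s :: L.map List.length) (oscillatingCount N))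
          (1 + (R.map List.length).sum) 0 := by
      rw [← ((hF.addStrips _).addStrip _).addStrip_one_zero]
      simp [addStrips, List.length_flatten]
    rw [hlength, addStrips_cons_removeBox_one_zero, List.flatten_cons,
      ncard_truncationsOpeningTo_append _ _ _ hdisj, Nat.cast_add, hR,
      ncard_truncationsOpeningTo_block s hB, ih _ hB.split, hblock]
    simp [addStrips]

lemma truncations_zero (s : ℕ) (B : List (List ℕ)) :
    truncations 0 s B = if s + B.flatten.length = 0 then {∅} else ∅ := by
  have hfixed (M) : fixedPts 0 M = ∅ := by simp [fixedPts]
  ext M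
  constructor
  · intro h
    have hM : M = ∅ := Finset.eq_empty_of_forall_notMem fun p hp => by
      have := h.bounds (a := p.1) (x := p.2) hp
      omega
    have hs : s = 0 := by rw [← h.card_fixedPts, hfixed, Finset.card_empty]
    have hB : B.flatten = [] := List.eq_nil_iff_forall_not_mem.2 fun x hx => by
      simpa [hM] using h.covers hx
    rw [if_pos (by rw [hs, hB]; rfl), hM]
    rfl
  · split_ifs with hsB
    · rintro rfl
      have hB : B.flatten = [] := List.length_eq_zero_iff.1 (by omega)
      have hs : s = 0 := by omega
      exact ⟨by simp, by simp, by simp, by simp [hB], by rw [hfixed, hs]; rfl, by simp, by simp,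
        by simp⟩
    · exact False.elim

lemma ncard_truncations_succ (N s : ℕ) (B : List (List ℕ)) :
    (truncations (N + 1) s B).ncard = {M | IsTruncation (N + 1) s B M ∧ ∃ p, (p, N + 1) ∈ M}.ncard +
      {M | IsTruncation (N + 1) s B M ∧ N + 1 ∈ fixedPts (N + 1) M}.ncard +
      (truncationsOpeningTo (N + 1) s B B.flatten).ncard := by
  have hfinite {p : Finset (ℕ × ℕ) → Prop} : {M | IsTruncation (N + 1) s B M ∧ p M}.Finite :=
    (finite_truncations (N + 1) s B).subset fun _ h => h.1
  rw [truncationsOpeningTo, ← Set.ncard_union_eq ?disjoint hfinite hfinite,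
    ← Set.ncard_union_eq ?disjoint' (hfinite.union hfinite) hfinite]
  case disjoint => exact Set.disjoint_left.2 fun M ⟨_, p, hp⟩ ⟨_, h⟩ => (mem_fixedPts.1 h).2.2 p hp
  case disjoint' =>
    refine Set.disjoint_left.2 fun M hM hM' => ?_
    have := hM'.1.ne
    simp only [Set.mem_union, Set.mem_ofPred_eq, mem_fixedPts] at hM hM'
    grind
  congr 1
  ext M
  simp only [truncations, Set.mem_union, Set.mem_ofPred_eq]
  refine ⟨fun h => ?_, by tauto⟩
  have := h.bounds (a := N + 1)
  grind [mem_fixedPts]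

lemma ncard_truncations (hB : IsPending N B) : ((truncations N s B).ncard : ℤ) =
    addStrips (s :: B.map List.length) (oscillatingCount N) 1 0 := by
  induction N generalizing s B with
  | zero =>
    rw [truncations_zero, addStrips_oscillatingCount_zero, List.sum_cons, List.length_flatten]
    split_ifs <;> simp
  | succ N ih =>
    have hF := isAntisymmetric_oscillatingCount N
    have hcloser : ({M | IsTruncation (N + 1) s B M ∧ ∃ p, (p, N + 1) ∈ M}.ncard : ℤ) =
        addStrips (s :: B.map List.length ++ [1]) (oscillatingCount N) 1 0 := by
      simpa [truncations, isTruncation_closer hB] using ih (s := s) hB.append_singleton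
    have hopener := ncard_truncationsOpeningTo_flatten (L := []) (s := s) (fun B hB => ih hB) hB
    rw [List.nil_append] at hopener
    rw [ncard_truncations_succ, addStrips_oscillatingCount_succ, Pi.add_apply, Pi.add_apply,
      Nat.cast_add, Nat.cast_add, hcloser, hopener, add_assoc, add_right_inj]
    rcases s with - | s
    · have hempty : {M | IsTruncation (N + 1) 0 B M ∧ N + 1 ∈ fixedPts (N + 1) M} = ∅ := by
        refine Set.eq_empty_of_forall_notMem fun M ⟨hM, hN⟩ => ?_
        simp [Finset.card_eq_zero.1 hM.card_fixedPts] at hN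
      simp [hempty, addStrips]
    · have hfixed := ih (s := s) hB.merge
      have hmerge : addStrips (s :: [B.flatten].map List.length) (oscillatingCount N) 1 0 =
          addStrip s (oscillatingCount N) (1 + (B.map List.length).sum) 0 := by
        rw [← (hF.addStrip _).addStrip_one_zero]
        simp [addStrips, List.length_flatten]
      simp only [isTruncation_fixed hB]
      rw [addStrips_cons_removeBox_one_zero, ← hmerge, ← hfixed]
      rfl

end Truncations

/-! ### Removing the fixed points -/

section Relabeling

variable {m n k : ℕ} {M : Finset (ℕ × ℕ)}

lemma strictMonoOn_rankIn (S : Finset ℕ) : StrictMonoOn (rankIn S) S := by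
  intro x _ y hy hxy
  refine Finset.card_lt_card ((Finset.ssubset_iff_of_subset ?_).2 ⟨y, ?_, ?_⟩)
  · exact Finset.monotone_filter_right S fun _ _ => (le_trans · hxy.le)
  · simpa using hy
  · simp [hxy]

lemma image_rankIn (S : Finset ℕ) : S.image (rankIn S) = Finset.Icc 1 S.card := by
  refine Finset.eq_of_subset_of_card_le (Finset.image_subset_iff.2 fun x hx => ?_) ?_
  · exact Finset.mem_Icc.2 ⟨Finset.card_pos.2 ⟨x, by simp [hx]⟩,
      Finset.card_le_card (Finset.filter_subset _ _)⟩
  · rw [Finset.card_image_of_injOn (strictMonoOn_rankIn S).injOn, Nat.card_Icc,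
      Nat.add_sub_cancel]

lemma card_matchedSet_add_card_fixedPts (m : ℕ) (M : Finset (ℕ × ℕ)) :
    (matchedSet m M).card + (fixedPts m M).card = m := by
  have hfixed : fixedPts m M =
      (Finset.Icc 1 m).filter fun x => ¬ ∃ p ∈ M, p.1 = x ∨ p.2 = x := by
    simp only [fixedPts, not_exists, not_and, not_or]
  rw [matchedSet, hfixed, Finset.card_filter_add_card_filter_not, Nat.card_Icc,
    Nat.add_sub_cancel]

lemma IsPartialMatching.mem_matchedSet (h : IsPartialMatching m M) {p : ℕ × ℕ} (hp : p ∈ M) :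
    p.1 ∈ matchedSet m M ∧ p.2 ∈ matchedSet m M := by
  have := h.1 p hp
  simp only [matchedSet, Finset.mem_filter, Finset.mem_Icc]
  exact ⟨⟨by omega, p, hp, Or.inl rfl⟩, ⟨by omega, p, hp, Or.inr rfl⟩⟩

lemma IsPartialMatching.isPerfectMatching_relabeled (h : IsPartialMatching m M)
    (hcard : (matchedSet m M).card = 2 * n) : IsPerfectMatching n (relabeled m M) := by
  have hrank := strictMonoOn_rankIn (matchedSet m M)
  have himage := hcard ▸ image_rankIn (matchedSet m M)
  have hIcc {x : ℕ} (hx : x ∈ matchedSet m M) :=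
    Finset.mem_Icc.1 (himage ▸ Finset.mem_image_of_mem _ hx)
  constructor
  · intro q hq
    obtain ⟨p, hp, rfl⟩ := Finset.mem_image.1 hq
    have hmem := h.mem_matchedSet hp
    exact ⟨hrank hmem.1 hmem.2 (h.1 p hp).1, (hIcc hmem.1).1, (hIcc hmem.2).2⟩
  · intro r hr hrn
    obtain ⟨x, hx, rfl⟩ := Finset.mem_image.1 (himage ▸ Finset.mem_Icc.2 ⟨hr, hrn⟩)
    obtain ⟨-, p, hp, hpx⟩ := Finset.mem_filter.1 hx
    refine ⟨_, ⟨Finset.mem_image_of_mem _ hp, ?_⟩, ?_⟩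
    · exact hpx.imp (congrArg (rankIn (matchedSet m M))) (congrArg (rankIn (matchedSet m M)))
    rintro _ ⟨hq', hqx⟩
    obtain ⟨q, hq, rfl⟩ := Finset.mem_image.1 hq'
    have hmem := h.mem_matchedSet hq
    have hqx : q.1 = x ∨ q.2 = x := hqx.imp (hrank.injOn hmem.1 hx) (hrank.injOn hmem.2 hx)
    have hqp : q = p := by
      by_contra hne
      have := h.2 q hq p hp hne
      omega
    rw [hqp]

lemma exists_mem_eq_of_forall_mem {τ : Equiv.Perm (Fin k)} {f : Fin (2 * k) → ℕ}
    (hf : ∀ a : Fin k, (f ⟨a, by omega⟩, f ⟨2 * k - 1 - τ a, by omega⟩) ∈ M) (i : Fin (2 * k)) :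
    ∃ p ∈ M, p.1 = f i ∨ p.2 = f i := by
  by_cases hi : i < k
  · exact ⟨_, hf ⟨i, hi⟩, Or.inl rfl⟩
  · refine ⟨_, hf (τ.symm ⟨2 * k - 1 - i, by omega⟩), Or.inr (congrArg f (Fin.ext ?_))⟩
    simp only [Equiv.apply_symm_apply]
    omega

lemma IsPartialMatching.matchContains_relabeled (h : IsPartialMatching m M)
    (τ : Equiv.Perm (Fin k)) : MatchContains τ (relabeled m M) ↔ MatchContains τ M := by
  have hrank := strictMonoOn_rankIn (matchedSet m M)
  constructor
  · rintro ⟨f, hmono, hf⟩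
    have hpreimage (i) : ∃ x ∈ matchedSet m M, rankIn (matchedSet m M) x = f i := by
      obtain ⟨_, hq, hqi⟩ := exists_mem_eq_of_forall_mem hf i
      obtain ⟨p, hp, rfl⟩ := Finset.mem_image.1 hq
      have hmem := h.mem_matchedSet hp
      exact hqi.elim (fun hi => ⟨_, hmem.1, hi⟩) fun hi => ⟨_, hmem.2, hi⟩
    choose g hg hgf using hpreimage
    refine ⟨g, fun i j hij => (hrank.lt_iff_lt (hg i) (hg j)).1 ?_, fun a => ?_⟩
    · rw [hgf, hgf]
      exact hmono hij
    · obtain ⟨⟨x, y⟩, hp, hpa⟩ := Finset.mem_image.1 (hf a)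
      have hmem := h.mem_matchedSet hp
      rw [← hgf, ← hgf, Prod.mk.injEq] at hpa
      rwa [← hrank.injOn hmem.1 (hg _) hpa.1, ← hrank.injOn hmem.2 (hg _) hpa.2]
  · rintro ⟨f, hmono, hf⟩
    have hmatched (i) : f i ∈ matchedSet m M := by
      obtain ⟨p, hp, hpi⟩ := exists_mem_eq_of_forall_mem hf i
      have hmem := h.mem_matchedSet hp
      exact hpi.elim (· ▸ hmem.1) (· ▸ hmem.2)
    exact ⟨rankIn (matchedSet m M) ∘ f, fun i j hij => hrank (hmatched i) (hmatched j) (hmono hij),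
      fun a => Finset.mem_image_of_mem _ (hf a)⟩

lemma matchContains_p321_iff : MatchContains p321 M ↔
    ∃ a b c x y z, (a, x) ∈ M ∧ (b, y) ∈ M ∧ (c, z) ∈ M ∧
      a < b ∧ b < c ∧ c < x ∧ x < y ∧ y < z := by
  constructor
  · rintro ⟨f, hmono, hf⟩
    exact ⟨f 0, f 1, f 2, f 3, f 4, f 5, hf 0, hf 1, hf 2, hmono (by decide), hmono (by decide),
      hmono (by decide), hmono (by decide), hmono (by decide)⟩
  · rintro ⟨a, b, c, x, y, z, ha, hb, hc, hab, hbc, hcx, hxy, hyz⟩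
    refine ⟨![a, b, c, x, y, z], Fin.strictMono_iff_lt_succ.2 fun i => ?_, fun i => ?_⟩
    · fin_cases i <;> assumption
    · fin_cases i <;> assumption

end Relabeling

/-- The set `M_n^k(321)`: the matchings of `[2n + k]` with `k` fixed points, none of which lies
below both arcs of a crossing, and whose relabeling is a perfect matching avoiding `321`. -/
def matchings321 (n k : ℕ) : Set (Finset (ℕ × ℕ)) :=
  {M | IsPartialMatching (2 * n + k) M ∧ (fixedPts (2 * n + k) M).card = k ∧
    IsPerfectMatching n (relabeled (2 * n + k) M) ∧
    MatchAvoids p321 (relabeled (2 * n + k) M) ∧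
    ∀ x1 x2 x3 x4 x5 : ℕ, x1 < x2 → x2 < x3 → x3 < x4 → x4 < x5 →
      (x1, x4) ∈ M → (x2, x5) ∈ M → x3 ∉ fixedPts (2 * n + k) M}

lemma isPartialMatching_iff {m : ℕ} {M : Finset (ℕ × ℕ)} : IsPartialMatching m M ↔
    (∀ ⦃a x⦄, (a, x) ∈ M → 1 ≤ a ∧ a < x ∧ x ≤ m) ∧
      (∀ ⦃a x b y⦄, (a, x) ∈ M → (b, y) ∈ M → a ≠ y) ∧
      ∀ ⦃a x b y⦄, (a, x) ∈ M → (b, y) ∈ M → (a = b ↔ x = y) := by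
  simp only [IsPartialMatching, Prod.forall]
  grind

lemma matchings321_eq_truncations (n k : ℕ) :
    matchings321 n k = truncations (2 * n + k) k [] := by
  ext M
  constructor
  · rintro ⟨hM, hfixed, -, havoids, hnot_crossing_fixed⟩
    rw [MatchAvoids, hM.matchContains_relabeled, matchContains_p321_iff] at havoids
    obtain ⟨hbounds, hne, heq_iff⟩ := isPartialMatching_iff.1 hM
    exact {
      bounds := by grind
      ne := hne
      eq_iff := heq_iff
      covers := by simp
      card_fixedPts := hfixed
      not_crossing := fun a b c x y z ha hb hc hab hbc hcx hxy hyz =>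
        havoids ⟨a, b, c, x, y, z, ha, hb, hc, hab, hbc, hcx, hxy, hyz⟩
      not_crossing_fixed := fun a b c x y ha hb hab hbc hcx hxy =>
        hnot_crossing_fixed a b c x y hab hbc hcx hxy ha hb
      nested := by simp }
  · intro h
    have hM : IsPartialMatching (2 * n + k) M :=
      isPartialMatching_iff.2 ⟨by have := h.bounds; grind, h.ne, h.eq_iff⟩
    have hcard := card_matchedSet_add_card_fixedPts (2 * n + k) M
    rw [h.card_fixedPts, Nat.add_right_cancel_iff] at hcard
    refine ⟨hM, h.card_fixedPts, hM.isPerfectMatching_relabeled hcard, ?_,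
      fun a b c x y hab hbc hcx hxy ha hb => h.not_crossing_fixed ha hb hab hbc hcx hxy⟩
    rw [MatchAvoids, hM.matchContains_relabeled, matchContains_p321_iff]
    rintro ⟨a, b, c, x, y, z, ha, hb, hc, hab, hbc, hcx, hxy, hyz⟩
    exact h.not_crossing ha hb hc hab hbc hcx hxy hyz

lemma ncard_matchings321 (n k : ℕ) :
    ((matchings321 n k).ncard : ℤ) = oscillatingCount (2 * n + k) (k + 1) 0 := by
  have hpending : IsPending (2 * n + k) [] := ⟨by simp, by simp⟩
  rw [matchings321_eq_truncations, ncard_truncations hpending, add_comm k 1,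
    ← (isAntisymmetric_oscillatingCount _).addStrip_one_zero]
  rfl

/-- `|M_n^k(321)|` equals the number of pairs `(D_0, D_1)` of noncrossing
Dyck paths of semilength `n + k` both ending with `k` south steps. -/
theorem card_Mnk321_eq_card_noncrossing_pairs (n k : ℕ) :
    {M : Finset (ℕ × ℕ) |
        IsPartialMatching (2 * n + k) M ∧ (fixedPts (2 * n + k) M).card = k ∧
        IsPerfectMatching n (relabeled (2 * n + k) M) ∧
        MatchAvoids p321 (relabeled (2 * n + k) M) ∧
        ∀ x1 x2 x3 x4 x5 : ℕ, x1 < x2 → x2 < x3 → x3 < x4 → x4 < x5 →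
          (x1, x4) ∈ M → (x2, x5) ∈ M → x3 ∉ fixedPts (2 * n + k) M}.ncard =
    {st : List Bool × List Bool |
        IsDyckPath (n + k) st.1 ∧ IsDyckPath (n + k) st.2 ∧ WeaklyBelow st.1 st.2 ∧
        st.1.drop (2 * (n + k) - k) = List.replicate k false ∧
        st.2.drop (2 * (n + k) - k) = List.replicate k false}.ncard := by
  have hcard := (ncard_matchings321 n k).trans (ncard_dyckPairs n k).symm
  exact Nat.cast_injective hcard
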